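/- arXiv:1709.01018 — 2 statements merged into one kernel-verified Lean document; each statement's English description precedes it below -/
import Mathlib

section
/- Let R ∈ (0,∞) and let h : cl(B_R(0)) ⊆ ℝ^d → ℝ^d be continuous with ⟨h(x), x⟩ ≥ 0 for every x with |x| = R. Then there exists x₀ ∈ cl(B_R(0)) such that h(x₀) = 0. -/
open RealInnerProductSpace

/-!
Suppose `h` has no zero on the closed ball `K` of radius `R`. The conditions `⟪p x, h x⟫ > 0` on `K`
and `⟪p x, x⟫ > 0` on the sphere are convex in `p x` and locally solvable, so a smooth field `p`
satisfies them (`exists_smooth_outward_field`). Moving `x` along the ray in direction `p x` up to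
the sphere is then a `C¹` retraction `x ↦ x + g x` of `K` onto its boundary (`exists_retraction`).

Such a retraction does not exist (`no_retraction`), by the volume argument of Milnor and Rogers.
Since `g` is Lipschitz and vanishes on the sphere, `x ↦ x + s • g x` is a bijection of `K` for small
`s ≥ 0` (`bijOn_perturbation`), with positive Jacobian (`det_one_add_smul_pos`). So the integral
of `det (1 + s • g')` over `K` is the volume of `K` for small `s > 0`. It is a polynomial in `s`, so
it also equals this volume at `s = 1` (`exists_interpolation`). But for `s = 1` the map takes values
in the sphere, and its Jacobian vanishes (`det_eq_zero_of_norm_const`).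
-/

open Metric Set Polynomial MeasureTheory
open scoped Manifold Topology ContDiff NNReal

/-! ### Smooth selection of a direction field -/

/-- If `h` has no zero on the closed ball and does not point strictly inward on the sphere, then
some smooth field `p` also has no zero there (it makes an acute angle with `h`) and points
strictly outward on the sphere. The constraints on `p x` are convex, so a partition of unity
glues locally constant choices. -/
lemma exists_smooth_outward_field {E : Type*} [NormedAddCommGroup E] [InnerProductSpace ℝ E]
    [FiniteDimensional ℝ E] {R : ℝ} (hR : 0 < R) {h : E → E}
    (hcont : ContinuousOn h (closedBall 0 R)) (hbd : ∀ x : E, ‖x‖ = R → 0 ≤ ⟪h x, x⟫)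
    (h0 : ∀ x ∈ closedBall (0 : E) R, h x ≠ 0) :
    ∃ p : E → E, ContDiff ℝ 1 p ∧ (∀ x ∈ closedBall (0 : E) R, p x ≠ 0) ∧
      ∀ x : E, ‖x‖ = R → 0 < ⟪p x, x⟫ := by
  have key : ∃ g : C^1⟮𝓘(ℝ, E), E; 𝓘(ℝ, E), E⟯, ∀ x, g x ∈
      {v : E | x ∈ closedBall (0 : E) R → 0 < ⟪v, h x⟫ ∧ (‖x‖ = R → 0 < ⟪v, x⟫)} := by
    apply exists_contMDiffMap_forall_mem_convex_of_local_const
    · intro x v hv w hw a b ha hb hab hx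
      obtain ⟨hv1, hv2⟩ := hv hx
      obtain ⟨hw1, hw2⟩ := hw hx
      have pos : ∀ s t : ℝ, 0 < s → 0 < t → 0 < a * s + b * t := by
        intro s t hs ht
        rcases ha.eq_or_lt with rfl | ha
        · have : b = 1 := by linarith
          subst this; linarith
        · positivity
      simp only [inner_add_left, real_inner_smul_left]
      exact ⟨pos _ _ hv1 hw1, fun hx => pos _ _ (hv2 hx) (hw2 hx)⟩
    · intro x
      by_cases hx : x ∈ closedBall (0 : E) R
      · have hposR : ∃ c : E, 0 < ⟪c, h x⟫ ∧ (‖x‖ = R → 0 < ⟪c, x⟫) := by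
          have hh : 0 < ⟪h x, h x⟫ := real_inner_self_pos.2 (h0 x hx)
          by_cases hxR : ‖x‖ = R
          · -- on the sphere, adding `x` makes a weakly outward vector strictly outward
            have hxx : 0 < ⟪x, x⟫ := real_inner_self_pos.2 (by
              rintro rfl; simp at hxR; linarith)
            have := hbd x hxR
            refine ⟨h x + x, ?_, fun _ => ?_⟩
            · rw [inner_add_left, real_inner_comm (h x) x]; linarith
            · rw [inner_add_left]; linarith
          · exact ⟨h x, hh, fun h => absurd h hxR⟩
        obtain ⟨c, hc1, hc2⟩ := hposR
        refine ⟨c, ?_⟩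
        have e1 : ∀ᶠ y in 𝓝 x, y ∈ closedBall (0 : E) R → 0 < ⟪c, h y⟫ := by
          rw [← eventually_nhdsWithin_iff]
          have : ContinuousWithinAt (fun y => ⟪c, h y⟫) (closedBall 0 R) x :=
            (show Continuous fun v : E => ⟪c, v⟫ by fun_prop).continuousAt.comp_continuousWithinAt
              (hcont x hx)
          exact this.eventually_const_lt hc1
        have e2 : ∀ᶠ y in 𝓝 x, ‖y‖ = R → 0 < ⟪c, y⟫ := by
          by_cases hxR : ‖x‖ = R
          · have : ContinuousAt (fun y => ⟪c, y⟫) x := by fun_prop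
            filter_upwards [this.eventually_const_lt (hc2 hxR)] with y hy _ using hy
          · have : ContinuousAt (fun y : E => ‖y‖) x := by fun_prop
            filter_upwards [this.eventually_ne hxR] with y hy h using absurd h hy
        filter_upwards [e1, e2] with y h1 h2 hy using ⟨h1 hy, h2⟩
      · refine ⟨0, ?_⟩
        filter_upwards [isClosed_closedBall.isOpen_compl.mem_nhds hx] with y hy hy'
          using absurd hy' hy
  obtain ⟨g, hg⟩ := key
  refine ⟨g, contMDiff_iff_contDiff.1 g.contMDiff, fun x hx h => ?_, fun x hx => ?_⟩
  · have := (hg x hx).1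
    simp [h] at this
  · exact (hg x (by simp [hx])).2 hx

/-! ### From a direction field to a retraction onto the sphere -/

/-- Following the ray from `x` in direction `p x` until it leaves the ball gives a `C¹` retraction
`x ↦ x + g x` of the closed ball onto the sphere. The exit time is the larger root of a quadratic
whose discriminant is positive on the closed ball. -/
lemma exists_retraction {E : Type*} [NormedAddCommGroup E] [InnerProductSpace ℝ E]
    {R : ℝ} {p : E → E} (hp : ContDiff ℝ 1 p)
    (hp0 : ∀ x ∈ closedBall (0 : E) R, p x ≠ 0) (hpR : ∀ x : E, ‖x‖ = R → 0 < ⟪p x, x⟫) :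
    ∃ (g : E → E) (U : Set E), IsOpen U ∧ closedBall 0 R ⊆ U ∧ ContDiffOn ℝ 1 g U ∧
      (∀ x, ‖x‖ = R → g x = 0) ∧ ∀ x ∈ closedBall (0 : E) R, ‖x + g x‖ = R := by
  set D : E → ℝ := fun x => ⟪p x, x⟫ ^ 2 + ‖p x‖ ^ 2 * (R ^ 2 - ‖x‖ ^ 2) with hD
  have hDc : ContDiff ℝ 1 D := by
    have h1 : ContDiff ℝ 1 (fun x => ⟪p x, x⟫) := hp.inner ℝ contDiff_id
    have h2 : ContDiff ℝ 1 (fun x => ‖p x‖ ^ 2) := hp.norm_sq ℝ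
    have h3 : ContDiff ℝ 1 (fun x : E => ‖x‖ ^ 2) := contDiff_id.norm_sq ℝ
    exact (h1.pow 2).add (h2.mul (contDiff_const.sub h3))
  have hDpos : ∀ x ∈ closedBall (0 : E) R, 0 < D x := by
    intro x hx
    have hp' : 0 < ‖p x‖ := norm_pos_iff.2 (hp0 x hx)
    have hx' : ‖x‖ ≤ R := by simpa using hx
    rcases hx'.eq_or_lt with h | h
    · have := hpR x h
      simp only [hD, h]
      simp only [sub_self, mul_zero, add_zero]
      positivity
    · have : 0 < R ^ 2 - ‖x‖ ^ 2 := by nlinarith [norm_nonneg x]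
      simp only [hD]
      positivity
  refine ⟨fun x => ((-⟪p x, x⟫ + √(D x)) / ‖p x‖ ^ 2) • p x, {x | p x ≠ 0 ∧ 0 < D x}, ?_, ?_, ?_,
    ?_, ?_⟩
  · exact (isOpen_ne_fun hp.continuous continuous_const).inter
      (isOpen_lt continuous_const hDc.continuous)
  · exact fun x hx => ⟨hp0 x hx, hDpos x hx⟩
  · intro x hx
    have h1 : ContDiffAt ℝ 1 (fun x => ⟪p x, x⟫) x := (hp.inner ℝ contDiff_id).contDiffAt
    have h2 : ContDiffAt ℝ 1 (fun x => ‖p x‖ ^ 2) x := (hp.norm_sq ℝ).contDiffAt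
    have h3 : ContDiffAt ℝ 1 (fun x => √(D x)) x := hDc.contDiffAt.sqrt hx.2.ne'
    have h4 : ‖p x‖ ^ 2 ≠ 0 := by simpa using hx.1
    exact (((h1.neg.add h3).div h2 h4).smul hp.contDiffAt).contDiffWithinAt
  · intro x hx
    have : D x = ⟪p x, x⟫ ^ 2 := by simp [hD, hx]
    simp only [this]
    rw [Real.sqrt_sq (hpR x hx).le]
    simp
  · intro x hx
    have hR0 : 0 ≤ R := (norm_nonneg x).trans (by simpa using hx)
    have hp' : 0 < ‖p x‖ := norm_pos_iff.2 (hp0 x hx)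
    have hs := Real.sq_sqrt (hDpos x hx).le
    rw [← sq_eq_sq₀ (norm_nonneg _) hR0, norm_add_sq_real, norm_smul, real_inner_smul_right,
      mul_pow, Real.norm_eq_abs, sq_abs, real_inner_comm (p x) x]
    set s := √(D x)
    have hs' : s ^ 2 = ⟪p x, x⟫ ^ 2 + ‖p x‖ ^ 2 * (R ^ 2 - ‖x‖ ^ 2) := hs
    field_simp
    linear_combination hs'

/-! ### Small perturbations of the identity of the ball -/

/-- Extension by zero of a Lipschitz map on the ball vanishing on the sphere. -/
lemma lipschitz_extend_zero {E : Type*} [NormedAddCommGroup E] [NormedSpace ℝ E]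
    {R : ℝ} {g : E → E} {C : ℝ≥0} (hg : LipschitzOnWith C g (closedBall 0 R))
    (hgR : ∀ x, ‖x‖ = R → g x = 0) :
    LipschitzWith C ((closedBall (0 : E) R).indicator g) := by
  have mixed : ∀ x ∈ closedBall (0 : E) R, ∀ y ∉ closedBall (0 : E) R,
      dist (g x) 0 ≤ C * dist x y := by
    intro x hx y hy
    -- the segment from `x` to `y` crosses the sphere, where `g` vanishes
    have hivt : R ∈ (fun t : ℝ => ‖AffineMap.lineMap x y t‖) '' Icc (0 : ℝ) 1 := by
      apply intermediate_value_Icc zero_le_one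
      · exact (AffineMap.lineMap_continuous).norm.continuousOn
      · simp at hx hy ⊢
        exact ⟨hx, hy.le⟩
    obtain ⟨t, ht, htR⟩ := hivt
    have hz : AffineMap.lineMap x y t ∈ closedBall (0 : E) R := by
      simpa using htR.le
    have := hg.dist_le_mul x hx _ hz
    rw [hgR _ htR] at this
    refine this.trans (mul_le_mul_of_nonneg_left ?_ C.2)
    rw [dist_left_lineMap, Real.norm_of_nonneg ht.1]
    nlinarith [ht.2, dist_nonneg (x := x) (y := y)]
  refine LipschitzWith.of_dist_le_mul fun x y => ?_
  by_cases hx : x ∈ closedBall (0 : E) R <;> by_cases hy : y ∈ closedBall (0 : E) R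
  · rw [indicator_of_mem hx, indicator_of_mem hy]; exact hg.dist_le_mul x hx y hy
  · rw [indicator_of_mem hx, indicator_of_notMem hy]; exact mixed x hx y hy
  · rw [indicator_of_notMem hx, indicator_of_mem hy, dist_comm, dist_comm x]; exact mixed y hy x hx
  · rw [indicator_of_notMem hx, indicator_of_notMem hy, dist_self]; positivity

/-- For small `s`, the map `x ↦ x + s • g x` is a bijection of the closed ball; surjectivity is the
Banach fixed point theorem for `x ↦ y - s • g x`. -/
lemma bijOn_perturbation {E : Type*} [NormedAddCommGroup E] [NormedSpace ℝ E] [CompleteSpace E]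
    {R : ℝ} {g : E → E} {C : ℝ≥0} (hg : LipschitzOnWith C g (closedBall 0 R))
    (hgR : ∀ x, ‖x‖ = R → g x = 0) (hr : ∀ x ∈ closedBall (0 : E) R, ‖x + g x‖ = R)
    {s : ℝ≥0} (hs : s ≤ 1) (hsC : s * C < 1) :
    BijOn (fun x => x + (s : ℝ) • g x) (closedBall 0 R) (closedBall 0 R) := by
  set G := (closedBall (0 : E) R).indicator g with hG
  have hGlip : LipschitzWith C G := lipschitz_extend_zero hg hgR
  have hcontr : ∀ y : E, ContractingWith (s * C) (fun x => y - (s : ℝ) • G x) := by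
    refine fun y => ⟨hsC, LipschitzWith.of_dist_le_mul fun a b => ?_⟩
    rw [dist_sub_left, dist_smul₀, Real.norm_of_nonneg s.coe_nonneg, NNReal.coe_mul, mul_assoc]
    exact mul_le_mul_of_nonneg_left (hGlip.dist_le_mul a b) s.2
  refine ⟨?_, ?_, ?_⟩
  · intro x hx
    have h2 : x + g x ∈ closedBall (0 : E) R := by simpa using (hr x hx).le
    have := (convex_closedBall (0 : E) R) hx h2 (a := 1 - s) (b := s) (sub_nonneg.2 hs) s.2
      (by ring)
    convert this using 1
    simp only
    module
  · intro a ha b hb hab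
    apply (hcontr (a + (s : ℝ) • g a)).fixedPoint_unique' (x := a) (y := b)
    · simp [Function.IsFixedPt, hG, indicator_of_mem ha]
    · simp only at hab
      simp [Function.IsFixedPt, hG, indicator_of_mem hb, hab]
  · intro y hy
    have hfix := (hcontr y).fixedPoint_isFixedPt
    set x := ContractingWith.fixedPoint _ (hcontr y)
    have hfix' : y - (s : ℝ) • G x = x := hfix
    by_cases hx : x ∈ closedBall (0 : E) R
    · refine ⟨x, hx, ?_⟩
      rw [hG, indicator_of_mem hx] at hfix'
      simp only
      nth_rw 1 [← hfix']
      simp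
    · rw [hG, indicator_of_notMem hx, smul_zero, sub_zero] at hfix'
      exact absurd (hfix' ▸ hy) hx

/-! ### The determinant of `1 + s • A` -/

/-- A nonvanishing determinant cannot change sign along the path `t ↦ 1 + t • A`. -/
lemma det_one_add_smul_pos {E : Type*} [NormedAddCommGroup E] [NormedSpace ℝ E]
    [FiniteDimensional ℝ E] (A : E →L[ℝ] E) {s : ℝ} (hs0 : 0 ≤ s) (hs : s * ‖A‖ < 1) :
    0 < (1 + s • A).det := by
  have hne : ∀ t ∈ Icc 0 s, (1 + t • A).det ≠ 0 := by
    intro t ht h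
    obtain ⟨v, hv, hv0⟩ := (Submodule.ne_bot_iff _).1
      (LinearMap.bot_lt_ker_of_det_eq_zero h).ne'
    have hv' : v + t • A v = 0 := by simpa using hv
    have h1 : ‖v‖ = t * ‖A v‖ := by
      have := congrArg norm (eq_neg_of_add_eq_zero_left hv')
      rwa [norm_neg, norm_smul, Real.norm_of_nonneg ht.1] at this
    have h2 := A.le_opNorm v
    have h3 : 0 < ‖v‖ := norm_pos_iff.2 hv0
    have h4 : t * ‖A v‖ ≤ s * (‖A‖ * ‖v‖) :=
      mul_le_mul ht.2 h2 (norm_nonneg _) hs0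
    nlinarith
  by_contra! hle
  have hc : ContinuousOn (fun t : ℝ => (1 + t • A).det) (Icc 0 s) :=
    (ContinuousLinearMap.continuous_det.comp (by fun_prop)).continuousOn
  obtain ⟨t, ht, h⟩ := intermediate_value_Icc' hs0 hc
    (show (0 : ℝ) ∈ Icc _ _ from ⟨hle, by simp [ContinuousLinearMap.det]⟩)
  exact hne t ht h

/-- `det (1 + s • A)` is a polynomial in `s` of degree at most the dimension. -/
lemma exists_poly_det {E : Type*} [NormedAddCommGroup E] [NormedSpace ℝ E]
    [FiniteDimensional ℝ E] (A : E →L[ℝ] E) :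
    ∃ P : ℝ[X], P.natDegree ≤ Module.finrank ℝ E ∧ ∀ s : ℝ, P.eval s = (1 + s • A).det := by
  let b := Module.finBasis ℝ E
  let M := LinearMap.toMatrix b b (A : E →ₗ[ℝ] E)
  refine ⟨((X : ℝ[X]) • M.map C + (1 : Matrix _ _ ℝ).map C).det, ?_, fun s => ?_⟩
  · simpa using natDegree_det_X_add_C_le M 1
  · have hM : LinearMap.toMatrix b b ((1 + s • A : E →L[ℝ] E) : E →ₗ[ℝ] E) = s • M + 1 := by
      simp [M, add_comm, LinearMap.toMatrix_one]
    rw [ContinuousLinearMap.det, ← LinearMap.det_toMatrix b, hM, ← coe_evalRingHom,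
      RingHom.map_det]
    congr 1
    ext i j
    by_cases hij : i = j <;> simp [hij] <;> ring

/-- There are nodes in `(0, s₀]` and weights of total mass one such that the value at `1` of each
function `s ↦ det (1 + s • A)` is the weighted sum of its values at the nodes
(Lagrange interpolation). -/
lemma exists_interpolation (E : Type*) [NormedAddCommGroup E] [NormedSpace ℝ E]
    [FiniteDimensional ℝ E] {s₀ : ℝ} (hs₀ : 0 < s₀) :
    ∃ (F : Finset ℕ) (v w : ℕ → ℝ), (∀ i ∈ F, 0 < v i ∧ v i ≤ s₀) ∧ ∑ i ∈ F, w i = 1 ∧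
      ∀ A : E →L[ℝ] E, (1 + A).det = ∑ i ∈ F, w i * (1 + v i • A).det := by
  set n := Module.finrank ℝ E
  set F := Finset.range (n + 1)
  set v : ℕ → ℝ := fun i => s₀ / (i + 1) with hv
  have hinj : Set.InjOn v F := by
    intro i _ j _ hij
    simp only [hv] at hij
    have hi : (i : ℝ) + 1 ≠ 0 := by positivity
    have hj : (j : ℝ) + 1 ≠ 0 := by positivity
    field_simp at hij
    exact_mod_cast (by linarith : (i : ℝ) = j)
  refine ⟨F, v, fun i => (Lagrange.basis F v i).eval 1, fun i _ => ⟨by positivity, ?_⟩, ?_, ?_⟩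
  · exact div_le_self hs₀.le (by linarith [(Nat.cast_nonneg i : (0 : ℝ) ≤ i)])
  · rw [← eval_finsetSum, Lagrange.sum_basis hinj ⟨0, by simp [F]⟩, eval_one]
  · intro A
    obtain ⟨P, hdeg, hP⟩ := exists_poly_det A
    have hdeg' : P.degree < F.card := by
      rw [Finset.card_range]
      exact (degree_le_of_natDegree_le hdeg).trans_lt (by exact_mod_cast Nat.lt_succ_self n)
    have := congrArg (eval 1) (Lagrange.eq_interpolate hinj hdeg')
    rw [Lagrange.interpolate_apply, eval_finsetSum, hP] at this
    rw [one_smul] at this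
    rw [this]
    refine Finset.sum_congr rfl fun i _ => ?_
    rw [eval_mul, eval_C, hP, mul_comm]

/-! ### No `C¹` retraction of the ball onto the sphere -/

/-- If `‖f‖` is constant near `x`, then the range of `f'` is orthogonal to `f x ≠ 0`, so `f'` is not
surjective. -/
lemma det_eq_zero_of_norm_const {E : Type*} [NormedAddCommGroup E] [InnerProductSpace ℝ E]
    [FiniteDimensional ℝ E] {R : ℝ} (hR : 0 < R) {f : E → E} {f' : E →L[ℝ] E} {x : E}
    (hf : HasFDerivAt f f' x) (hx : ∀ᶠ y in 𝓝 x, ‖f y‖ = R) : f'.det = 0 := by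
  by_contra hdet
  have hsurj : Function.Surjective f' := by
    have := (LinearMap.isUnit_iff_isUnit_det (f' : E →ₗ[ℝ] E)).2 (isUnit_iff_ne_zero.2 hdet)
    exact ((Module.End.isUnit_iff _).1 this).2
  obtain ⟨v, hv⟩ := hsurj (f x)
  have h1 : HasFDerivAt (fun y => ‖f y‖ ^ 2) _ x := hf.norm_sq
  have h2 : HasFDerivAt (fun y => ‖f y‖ ^ 2) (0 : E →L[ℝ] ℝ) x := by
    refine (hasFDerivAt_const (R ^ 2) x).congr_of_eventuallyEq ?_
    filter_upwards [hx] with y hy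
    rw [hy]
  have h3 := congrArg (fun L : E →L[ℝ] ℝ => L v) (h1.unique h2)
  simp [hv, hx.self_of_nhds] at h3
  exact hR.ne' h3

/-- The volume of the image of the ball under `x ↦ x + s • g x` is the integral of
`det (1 + s • g')`. It equals the volume of the ball for small `s`, hence, being polynomial in `s`,
for `s = 1`; but the Jacobian of the retraction vanishes. -/
theorem no_retraction {E : Type*} [NormedAddCommGroup E] [InnerProductSpace ℝ E]
    [FiniteDimensional ℝ E] [MeasurableSpace E] [BorelSpace E] {R : ℝ} (hR : 0 < R)
    {g : E → E} {U : Set E} (hU : IsOpen U) (hKU : closedBall 0 R ⊆ U)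
    (hg : ContDiffOn ℝ 1 g U) (hgR : ∀ x, ‖x‖ = R → g x = 0)
    (hr : ∀ x ∈ closedBall (0 : E) R, ‖x + g x‖ = R) : False := by
  let μ : Measure E := Measure.addHaar
  set K := closedBall (0 : E) R with hK
  have hKc : IsCompact K := isCompact_closedBall 0 R
  have hder : ∀ x ∈ K, HasFDerivAt g (fderiv ℝ g x) x := fun x hx =>
    ((hg.differentiableOn one_ne_zero).differentiableAt (hU.mem_nhds (hKU hx))).hasFDerivAt
  have hcont : ContinuousOn (fderiv ℝ g) K :=
    (hg.continuousOn_fderiv_of_isOpen hU le_rfl).mono hKU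
  obtain ⟨C, hC0, hC⟩ : ∃ C : ℝ≥0, 0 < C ∧ ∀ x ∈ K, ‖fderiv ℝ g x‖₊ ≤ C := by
    obtain ⟨C, hC⟩ := hKc.exists_bound_of_continuousOn hcont
    refine ⟨C.toNNReal + 1, by positivity, fun x hx => ?_⟩
    rw [← NNReal.coe_le_coe, coe_nnnorm, NNReal.coe_add, NNReal.coe_one]
    linarith [hC x hx, Real.le_coe_toNNReal C]
  have hlip : LipschitzOnWith C g K :=
    (convex_closedBall 0 R).lipschitzOnWith_of_nnnorm_hasFDerivWithin_le
      (fun x hx => (hder x hx).hasFDerivWithinAt) hC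
  set J : ℝ → E → ℝ := fun s x => (1 + s • fderiv ℝ g x).det with hJ
  have hJint : ∀ s, IntegrableOn (J s) K μ := fun s => by
    refine ContinuousOn.integrableOn_compact hKc ?_
    exact ContinuousLinearMap.continuous_det.comp_continuousOn
      (continuousOn_const.add (hcont.const_smul s))
  have hmap : ∀ s : ℝ, ∀ x ∈ K,
      HasFDerivAt (fun x => x + s • g x) (1 + s • fderiv ℝ g x) x := fun s x hx =>
    (hasFDerivAt_id x).add ((hder x hx).const_smul s)
  -- any `s₀ ≤ 1` with `s₀ * C < 1` works
  set s₀ : ℝ := 1 / (C + 1) with hs₀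
  have hs₀pos : 0 < s₀ := by positivity
  have hsmall : ∀ s : ℝ, 0 < s → s ≤ s₀ → ∫ x in K, J s x ∂μ = μ.real K := by
    intro s hs hss
    have hsC : s * C < 1 := by
      have : s * (C + 1) ≤ 1 := by rwa [hs₀, le_div_iff₀ (by positivity)] at hss
      nlinarith
    have hs1 : s ≤ 1 := hss.trans (by
      rw [hs₀, div_le_one (by positivity)]; linarith [C.2])
    lift s to ℝ≥0 using hs.le
    have hbij := bijOn_perturbation hlip hgR hr (s := s) (by exact_mod_cast hs1)
      (by exact_mod_cast hsC)
    have hcv := integral_image_eq_integral_abs_det_fderiv_smul μ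
      (isClosed_closedBall.measurableSet : MeasurableSet K)
      (fun x hx => (hmap s x hx).hasFDerivWithinAt) hbij.injOn (fun _ => (1 : ℝ))
    rw [hbij.image_eq] at hcv
    have habs : ∫ x in K, J s x ∂μ = ∫ x in K, |(1 + (s : ℝ) • fderiv ℝ g x).det| • (1 : ℝ) ∂μ := by
      refine setIntegral_congr_fun isClosed_closedBall.measurableSet fun x hx => ?_
      have hn : ‖fderiv ℝ g x‖ ≤ C := hC x hx
      have := det_one_add_smul_pos (fderiv ℝ g x) s.2
        ((mul_le_mul_of_nonneg_left hn s.2).trans_lt hsC)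
      simp only [hJ, smul_eq_mul, mul_one]
      exact (abs_of_pos this).symm
    rw [habs, hK, ← hcv]
    simp
  obtain ⟨F, v, w, hv, hw, hdet⟩ := exists_interpolation E hs₀pos
  have hone : ∫ x in K, J 1 x ∂μ = μ.real K := by
    have : ∀ x, J 1 x = ∑ i ∈ F, w i * J (v i) x := fun x => by
      simp only [hJ, one_smul]; exact hdet _
    simp_rw [this]
    rw [integral_finsetSum _ fun i _ => (hJint (v i)).const_mul (w i)]
    simp_rw [integral_const_mul]
    rw [Finset.sum_congr rfl fun i hi => by rw [hsmall (v i) (hv i hi).1 (hv i hi).2],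
      ← Finset.sum_mul, hw, one_mul]
  -- `J 1` vanishes only in the open ball, but the sphere is negligible
  have hzero : ∫ x in K, J 1 x ∂μ = 0 := by
    have hae : K =ᵐ[μ] ball (0 : E) R := by
      rw [ae_eq_set, hK, closedBall_sdiff_ball, sdiff_eq_bot_iff.2 ball_subset_closedBall]
      exact ⟨Measure.addHaar_sphere_of_ne_zero μ 0 hR.ne', measure_empty⟩
    rw [setIntegral_congr_set hae]
    refine setIntegral_eq_zero_of_forall_eq_zero fun x hx => ?_
    refine det_eq_zero_of_norm_const hR (hmap 1 x (ball_subset_closedBall hx)) ?_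
    filter_upwards [isOpen_ball.mem_nhds hx] with y hy
    rw [one_smul]
    exact hr y (ball_subset_closedBall hy)
  have hpos : 0 < μ.real K :=
    ENNReal.toReal_pos (measure_closedBall_pos μ 0 hR).ne' hKc.measure_lt_top.ne
  linarith

/-- If `h` is continuous on the closed ball of radius `R > 0`
around the origin of `ℝ^d` and `⟨h(x), x⟩ ≥ 0` for every `x` with `|x| = R`,
then `h` has a root in the closed ball. -/
theorem stmt2
    (d : ℕ) (R : ℝ) (hR : 0 < R)
    (h : EuclideanSpace ℝ (Fin d) → EuclideanSpace ℝ (Fin d))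
    (hcont : ContinuousOn h (Metric.closedBall (0 : EuclideanSpace ℝ (Fin d)) R))
    (hbd : ∀ x : EuclideanSpace ℝ (Fin d), ‖x‖ = R → 0 ≤ ⟪h x, x⟫) :
    ∃ x₀ ∈ Metric.closedBall (0 : EuclideanSpace ℝ (Fin d)) R, h x₀ = 0 := by
  by_contra! h0
  obtain ⟨p, hp, hp0, hpR⟩ := exists_smooth_outward_field hR hcont hbd h0
  obtain ⟨g, U, hU, hKU, hg, hgR, hr⟩ := exists_retraction hp hp0 hpR
  exact no_retraction hR hU hKU hg hgR hr
end

section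
/- Let Q ∈ ℝ^{d×d} be symmetric and positive definite, R ∈ (0,∞), and set B_{Q,R} = { x ∈ ℝ^d : ⟨Qx, x⟩ ≤ R² }. If h : B_{Q,R} → ℝ^d is continuous and satisfies ⟨Q h(x), x⟩ ≥ 0 for every x ∈ ℝ^d with ⟨Qx, x⟩ = R², then there exists x₀ ∈ B_{Q,R} with h(x₀) = 0. -/
/-!
Suppose `h` has no zero in the ellipsoid `K = {q ≤ R²}`, where `q x = ⟨Qx, x⟩`. A partition of unity
gives a `C¹` field `f` which has no zero in `K` and satisfies `⟨Q f(x), x⟩ > 0` on the boundary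
(`exists_smooth_approx`). Gluing with a cutoff `χ`, the map `F = χ f + (1 - χ) id` is `C¹`, has no
zero, and is the identity off `K`.

No such map exists (`exists_zero_of_id_off_compact`), by a volume argument in the spirit of Milnor and
Rogers, which stands in for Brouwer's theorem. Write `F = id + g` and `F_t = id + t g`. For small `t`,
`F_t` restricts to a bijection of `K` with positive Jacobian, so
`∫_K (M - q(F_t x))^N det DF_t(x) dx = ∫_K (M - q y)^N dy`.
As `q` is quadratic, the integrand on the left is polynomial in `t`, so the identity also holds at
`t = 1` (`integral_deform`). But `q ∘ F ≥ δ > 0` on `K` makes the left side `O((M - δ)^N)`, whereas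
the right side is at least a positive multiple of `(M - δ/2)^N`, coming from a neighbourhood of `0`.
-/

open Matrix

open Polynomial in
/-- Extrapolation to `1` from any finite set of nodes is a fixed linear combination of node values,
valid for all polynomials of small enough degree. -/
theorem lagrange_weights (s : Finset ℝ) : ∃ w : ℝ → ℝ, ∀ p : ℝ[X], p.natDegree < s.card →
    p.eval 1 = ∑ i ∈ s, w i * p.eval i := by
  refine ⟨fun i => (Lagrange.basis s id i).eval 1, fun p hp => ?_⟩
  have h := Lagrange.eq_interpolate (s := s) (v := id) (f := p) (Function.injective_id.injOn)
    (lt_of_le_of_lt degree_le_natDegree (by exact_mod_cast hp))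
  conv_lhs => rw [h]
  simp [Lagrange.interpolate_apply, eval_finsetSum, mul_comm]

open Polynomial in
/-- With `a + t b + t² c` standing for `q (x + t g x)` and `L` for `Dg(x)`, the integrand of
`integral_deform` is a polynomial in `t` whose degree is bounded independently of `x`. -/
theorem density_polynomial {d : ℕ} (L : (Fin d → ℝ) →L[ℝ] (Fin d → ℝ)) (a b c M : ℝ) (N : ℕ) :
    ∃ p : ℝ[X], p.natDegree ≤ 2 * N + d ∧ ∀ t : ℝ, p.eval t =
      (M - (a + t * b + t ^ 2 * c)) ^ N * (ContinuousLinearMap.id ℝ (Fin d → ℝ) + t • L).det := by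
  set A : Matrix (Fin d) (Fin d) ℝ := LinearMap.toMatrix' (L : (Fin d → ℝ) →ₗ[ℝ] (Fin d → ℝ))
  set P : ℝ[X] := Matrix.det ((X : ℝ[X]) • A.map C + (1 : Matrix (Fin d) (Fin d) ℝ).map C)
  refine ⟨(C M - (C a + X * C b + X ^ 2 * C c)) ^ N * P, ?_, fun t => ?_⟩
  · refine natDegree_mul_le.trans (add_le_add ?_ ?_)
    · refine natDegree_pow_le.trans ?_
      rw [mul_comm]
      gcongr
      compute_degree
    · simpa only [Fintype.card_fin] using natDegree_det_X_add_C_le A 1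
  · have h1 : P.eval t = (t • A + 1).det := by
      rw [← coe_evalRingHom, RingHom.map_det]
      congr 1
      ext i j
      by_cases hij : i = j <;> simp [hij] <;> ring
    have h2 : (ContinuousLinearMap.id ℝ (Fin d → ℝ) + t • L).det = (t • A + 1).det := by
      rw [ContinuousLinearMap.det, ← LinearMap.det_toMatrix']
      congr 1
      simp [A, add_comm]
    rw [eval_mul, h1, h2]
    congr 1
    simp only [eval_pow, eval_sub, eval_add, eval_mul, eval_C, eval_X]

theorem perturb_bijective {E : Type*} [NormedAddCommGroup E] [NormedSpace ℝ E] [CompleteSpace E]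
    {g : E → E} {C : NNReal} (hg : LipschitzWith C g) {t : ℝ} (ht : ‖t‖₊ * C < 1) :
    Function.Bijective fun x => x + t • g x := by
  have key : ∀ y, ContractingWith (‖t‖₊ * C) fun x => y - t • g x := fun y =>
    ⟨ht, LipschitzWith.of_dist_le_mul fun a b => by
      have := hg.dist_le_mul a b
      rw [dist_sub_left, dist_smul₀]
      push_cast
      rw [mul_assoc]
      gcongr⟩
  constructor
  · intro a b hab
    have hb : Function.IsFixedPt (fun x => (a + t • g a) - t • g x) b := by
      have : a + t • g a = b + t • g b := hab
      simp [Function.IsFixedPt, this]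
    exact (key (a + t • g a)).fixedPoint_unique' (by simp [Function.IsFixedPt]) hb
  · intro y
    have : Nonempty E := ⟨0⟩
    refine ⟨(key y).fixedPoint, ?_⟩
    have h := (key y).fixedPoint_isFixedPt
    simp only [Function.IsFixedPt] at h
    exact (sub_eq_iff_eq_add.1 h).symm

open MeasureTheory Set in
/-- A weighted change of variables for `x ↦ x + g x`, which need not be injective, when `g` is `C¹`
and vanishes off the compact set `K`. For small `t` the map `x ↦ x + t g x` is a bijection of `K`
with positive Jacobian, so the identity for `t • g` is the usual change of variables; both sides are
polynomial in `t`, hence it persists at `t = 1`. -/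
theorem integral_deform {d : ℕ} {K : Set (Fin d → ℝ)} (hK : IsCompact K)
    {g : (Fin d → ℝ) → (Fin d → ℝ)} (hg : ContDiff ℝ 1 g) (hgK : ∀ x ∉ K, g x = 0)
    {q : (Fin d → ℝ) → ℝ} (hqc : Continuous q)
    (hq : ∀ x v, ∃ b, ∀ t : ℝ, q (x + t • v) = q x + t * b + t ^ 2 * q v) (M : ℝ) (N : ℕ) :
    ∫ x in K, (M - q (x + g x)) ^ N *
        (ContinuousLinearMap.id ℝ (Fin d → ℝ) + fderiv ℝ g x).det = ∫ y in K, (M - q y) ^ N := by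
  set J : ℝ → (Fin d → ℝ) → ℝ := fun t x => (M - q (x + t • g x)) ^ N *
        (ContinuousLinearMap.id ℝ (Fin d → ℝ) + t • fderiv ℝ g x).det with hJ
  have hdc : Continuous fun z : ℝ × (Fin d → ℝ) =>
      (ContinuousLinearMap.id ℝ (Fin d → ℝ) + z.1 • fderiv ℝ g z.2).det := by
    refine ContinuousLinearMap.continuous_det.comp ?_
    have := hg.continuous_fderiv one_ne_zero
    fun_prop
  have hJc : ∀ t, Continuous (J t) := fun t => by
    have h1 := hdc.comp (Continuous.prodMk_right t)
    have h2 := hg.continuous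
    exact ((continuous_const.sub (hqc.comp (by fun_prop))).pow N).mul h1
  obtain ⟨C, hC⟩ := (ContDiff.lipschitzWith_of_hasCompactSupport (𝕂 := ℝ)
    (HasCompactSupport.intro hK hgK) hg one_ne_zero)
  have hev : ∀ᶠ t : ℝ in nhds 0, ∫ x in K, J t x = ∫ y in K, (M - q y) ^ N := by
    have e1 : ∀ᶠ t : ℝ in nhds 0, ‖t‖₊ * C < 1 := by
      have : Continuous fun t : ℝ => ‖t‖₊ * C := by fun_prop
      exact this.continuousAt.eventually_lt_const (by simp)
    have e2 : ∀ᶠ t : ℝ in nhds 0, ∀ x ∈ K,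
        0 < (ContinuousLinearMap.id ℝ (Fin d → ℝ) + t • fderiv ℝ g x).det := by
      refine hK.eventually_forall_of_forall_eventually fun y _ => ?_
      exact hdc.continuousAt.eventually_const_lt (by simp [ContinuousLinearMap.det])
    filter_upwards [e1, e2] with t h1 h2
    have hbij := perturb_bijective hC h1
    have himg : (fun x => x + t • g x) '' K = K := by
      have hfix : ∀ x ∉ K, x + t • g x = x := fun x hx => by simp [hgK x hx]
      ext y
      constructor
      · rintro ⟨x, hx, rfl⟩
        by_contra hy
        have h3 : x + t • g x = x := hbij.1 (hfix _ hy)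
        exact hy (by simpa only [h3] using hx)
      · intro hy
        obtain ⟨x, rfl⟩ := hbij.2 y
        by_cases hx : x ∈ K
        · exact ⟨x, hx, rfl⟩
        · simp only [hfix x hx] at hy
          exact absurd hy hx
    have hcv := integral_image_eq_integral_abs_det_fderiv_smul volume hK.measurableSet
      (f := fun x => x + t • g x)
      (f' := fun x => ContinuousLinearMap.id ℝ (Fin d → ℝ) + t • fderiv ℝ g x)
      (fun x _ => ((hasFDerivAt_id x).add
        (((hg.differentiable one_ne_zero) x).hasFDerivAt.const_smul t)).hasFDerivWithinAt)
      hbij.1.injOn (fun y => (M - q y) ^ N)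
    rw [himg] at hcv
    rw [hcv]
    refine setIntegral_congr_fun hK.measurableSet fun x hx => ?_
    simp only [hJ, smul_eq_mul, abs_of_pos (h2 x hx)]
    ring
  obtain ⟨s, hs, hcard⟩ := (infinite_of_mem_nhds (0 : ℝ) hev).exists_subset_card_eq (2 * N + d + 1)
  obtain ⟨w, hw⟩ := lagrange_weights s
  have hw1 : 1 = ∑ i ∈ s, w i := by
    simpa using hw 1 (by simp [hcard])
  have hJ1 : ∀ x, J 1 x = ∑ i ∈ s, w i * J i x := fun x => by
    obtain ⟨b, hb⟩ := hq x (g x)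
    obtain ⟨p, hpd, hp⟩ := density_polynomial (fderiv ℝ g x) (q x) b (q (g x)) M N
    have hpJ : ∀ t, p.eval t = J t x := fun t => by rw [hp, hJ]; simp only [hb]
    simpa only [hpJ] using hw p (by omega)
  calc _ = ∫ x in K, J 1 x := by simp [hJ]
    _ = ∑ i ∈ s, w i * ∫ x in K, J i x := by
      simp_rw [hJ1]
      rw [integral_finsetSum]
      · simp_rw [integral_const_mul]
      · exact fun i _ => ((hJc i).continuousOn.integrableOn_compact hK).const_mul _
    _ = ∑ i ∈ s, w i * ∫ y in K, (M - q y) ^ N :=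
      Finset.sum_congr rfl fun i hi => by rw [show ∫ x in K, J i x = _ from hs hi]
    _ = _ := by rw [← Finset.sum_mul, ← hw1, one_mul]

open MeasureTheory Set in
/-- A `C¹` map which is the identity off the ellipsoid `{q ≤ r}` has a zero in it: otherwise
`δ ≤ q ∘ F` there, and the weights `(M - q)^N` of `integral_deform` give an integral of order at most
`(M - δ)^N` on one side and at least `(M - δ/2)^N` on the other. -/
theorem exists_zero_of_id_off_compact {d : ℕ} {q : (Fin d → ℝ) → ℝ} (hqc : Continuous q)
    (hq : ∀ x v, ∃ b, ∀ t : ℝ, q (x + t • v) = q x + t * b + t ^ 2 * q v)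
    (hq0 : q 0 = 0) (hqpos : ∀ x, x ≠ 0 → 0 < q x) {r : ℝ} (hr : 0 < r)
    (hK : IsCompact {x | q x ≤ r}) {F : (Fin d → ℝ) → (Fin d → ℝ)} (hF : ContDiff ℝ 1 F)
    (hFK : ∀ x, r < q x → F x = x) : ∃ x, q x ≤ r ∧ F x = 0 := by
  by_contra! hne
  set K := {x | q x ≤ r} with hKdef
  have hKne : K.Nonempty := ⟨0, by simp [hKdef, hq0, hr.le]⟩
  obtain ⟨x₁, hx₁, hmin⟩ := hK.exists_isMinOn hKne (hqc.comp hF.continuous).continuousOn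
  obtain ⟨x₂, hx₂, hmax⟩ := hK.exists_isMaxOn hKne (hqc.comp hF.continuous).continuousOn
  set δ := q (F x₁)
  have hδ : 0 < δ := hqpos _ (hne _ hx₁)
  set M := r + q (F x₂) + δ
  have hx12 : δ ≤ q (F x₂) := hmax hx₁
  set g : (Fin d → ℝ) → (Fin d → ℝ) := fun x => F x - x
  have hg : ContDiff ℝ 1 g := hF.sub contDiff_id
  have hgK : ∀ x ∉ K, g x = 0 := fun x hx => by simp [g, hFK x (not_le.1 hx)]
  have hD : Continuous fun x => (ContinuousLinearMap.id ℝ (Fin d → ℝ) + fderiv ℝ g x).det := by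
    refine ContinuousLinearMap.continuous_det.comp ?_
    have := hg.continuous_fderiv one_ne_zero
    fun_prop
  obtain ⟨C, hC⟩ := hK.exists_bound_of_continuousOn hD.continuousOn
  have hvol : volume K < ⊤ := hK.measure_lt_top
  -- on `U` the weight `M - q` exceeds all its values on the image of `K` under `F`
  set U := {x | q x < min r (δ / 2)}
  have hUo : IsOpen U := isOpen_lt hqc continuous_const
  have hUK : U ⊆ K := fun x (hx : q x < _) =>
    show q x ≤ r from (lt_of_lt_of_le hx (min_le_left _ _)).le
  have hUpos : 0 < volume.real U := by
    refine ENNReal.toReal_pos (hUo.measure_pos volume ⟨0, ?_⟩).ne'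
      (lt_of_le_of_lt (measure_mono hUK) hvol).ne
    show q 0 < _
    rw [hq0]; positivity
  have hb : 0 < M - δ := by simp only [M]; linarith
  have key : ∀ N : ℕ, volume.real U * (M - δ / 2) ^ N ≤ C * volume.real K * (M - δ) ^ N := by
    intro N
    have hi : IntegrableOn (fun y => (M - q y) ^ N) K :=
      ((continuous_const.sub hqc).pow N).continuousOn.integrableOn_compact hK
    have h1 : volume.real U * (M - δ / 2) ^ N ≤ ∫ y in K, (M - q y) ^ N := by
      calc _ = ∫ y in U, (M - δ / 2) ^ N := by simp
        _ ≤ ∫ y in U, (M - q y) ^ N := by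
          refine setIntegral_mono_on ?_ (hi.mono_set hUK) hUo.measurableSet fun y hy => ?_
          · exact integrableOn_const (lt_of_le_of_lt (measure_mono hUK) hvol).ne
          · have : q y < δ / 2 := lt_of_lt_of_le hy (min_le_right _ _)
            exact pow_le_pow_left₀ (by linarith) (by linarith) _
        _ ≤ _ := by
          refine setIntegral_mono_set hi ?_ hUK.eventuallyLE
          filter_upwards [ae_restrict_mem hK.measurableSet] with y hy
          have : q y ≤ r := hy
          exact pow_nonneg (by simp only [M]; linarith) _
    have h2 : ‖∫ x in K, (M - q (x + g x)) ^ N *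
        (ContinuousLinearMap.id ℝ (Fin d → ℝ) + fderiv ℝ g x).det‖
          ≤ ((M - δ) ^ N * C) * volume.real K := by
      refine norm_setIntegral_le_of_norm_le_const hvol fun x hx => ?_
      have e1 : δ ≤ q (F x) := hmin hx
      have e2 : q (F x) ≤ q (F x₂) := hmax hx
      have e3 : x + g x = F x := by simp [g]
      have e4 : 0 ≤ M - q (F x) := by simp only [M]; linarith
      rw [e3, norm_mul, norm_pow, Real.norm_of_nonneg e4]
      gcongr
      exact hC x hx
    rw [integral_deform hK hg hgK hqc hq M N] at h2
    calc _ ≤ _ := h1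
      _ ≤ _ := le_abs_self _
      _ ≤ _ := h2
      _ = _ := by ring
  obtain ⟨N, hN⟩ := pow_unbounded_of_one_lt (C * volume.real K / volume.real U)
    (show 1 < (M - δ / 2) / (M - δ) by rw [one_lt_div hb]; linarith)
  rw [div_pow, div_lt_div_iff₀ hUpos (pow_pos hb N)] at hN
  linarith [key N]

theorem isCompact_sublevel {d : ℕ} {Q : Matrix (Fin d) (Fin d) ℝ}
    (hpos : ∀ x, x ≠ 0 → 0 < Q *ᵥ x ⬝ᵥ x) (r : ℝ) : IsCompact {x | Q *ᵥ x ⬝ᵥ x ≤ r} := by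
  have hqc : Continuous fun x : Fin d → ℝ => Q *ᵥ x ⬝ᵥ x := by fun_prop
  refine Metric.isCompact_of_isClosed_isBounded (isClosed_le hqc continuous_const) ?_
  rcases (Metric.sphere (0 : Fin d → ℝ) 1).eq_empty_or_nonempty with he | hne
  · have : Subsingleton (Fin d → ℝ) := by
      by_contra hns
      rw [not_subsingleton_iff_nontrivial] at hns
      exact (NormedSpace.sphere_nonempty.2 zero_le_one).ne_empty he
    exact Set.subsingleton_of_subsingleton.finite.isBounded
  · obtain ⟨u, hu, hmin⟩ := (isCompact_sphere (0 : Fin d → ℝ) 1).exists_isMinOn hne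
      hqc.continuousOn
    have hu0 : u ≠ 0 := by rintro rfl; simp at hu
    have hc := hpos u hu0
    refine isBounded_iff_forall_norm_le.2 ⟨√(r / (Q *ᵥ u ⬝ᵥ u)), fun x hx => ?_⟩
    refine Real.le_sqrt_of_sq_le ?_
    rw [le_div_iff₀ hc]
    refine le_trans ?_ hx
    by_cases hx0 : x = 0
    · simp [hx0]
    have hn : ‖x‖ ≠ 0 := norm_ne_zero_iff.2 hx0
    have := hmin (show ‖x‖⁻¹ • x ∈ Metric.sphere 0 1 by simp [norm_smul, hn])
    simp only [mulVec_smul, smul_dotProduct, dotProduct_smul, smul_eq_mul, Set.mem_ofPred_eq] at this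
    calc _ ≤ ‖x‖ ^ 2 * (‖x‖⁻¹ * (‖x‖⁻¹ * (Q *ᵥ x ⬝ᵥ x))) := by gcongr
      _ = _ := by field_simp

open Set Topology in
/-- A field `h` without zeros in the ellipsoid and weakly outward on its boundary can be replaced by
a `C¹` field without zeros there which is strictly outward on the boundary. -/
theorem exists_smooth_approx {d : ℕ} {Q : Matrix (Fin d) (Fin d) ℝ} {r : ℝ} (hr : 0 < r)
    {h : (Fin d → ℝ) → (Fin d → ℝ)} (hcont : ContinuousOn h {x | Q *ᵥ x ⬝ᵥ x ≤ r})
    (hbd : ∀ x, Q *ᵥ x ⬝ᵥ x = r → 0 ≤ Q *ᵥ h x ⬝ᵥ x)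
    (hne : ∀ x, Q *ᵥ x ⬝ᵥ x ≤ r → h x ≠ 0) :
    ∃ f : (Fin d → ℝ) → (Fin d → ℝ), ContDiff ℝ 1 f ∧
      (∀ x, Q *ᵥ x ⬝ᵥ x ≤ r → f x ≠ 0) ∧ ∀ x, Q *ᵥ x ⬝ᵥ x = r → 0 < Q *ᵥ f x ⬝ᵥ x := by
  set K := {x : Fin d → ℝ | Q *ᵥ x ⬝ᵥ x ≤ r} with hKdef
  have hqc : Continuous fun x : Fin d → ℝ => Q *ᵥ x ⬝ᵥ x := by fun_prop
  have hKc : IsClosed K := isClosed_le hqc continuous_const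
  -- `0 < v ⬝ᵥ h x` is a convex condition that excludes `v = 0`, so a partition of unity applies
  let t : (Fin d → ℝ) → Set (Fin d → ℝ) := fun x =>
    {v : Fin d → ℝ | x ∈ K → 0 < v ⬝ᵥ h x ∧
      (Q *ᵥ x ⬝ᵥ x = r → 0 < Q *ᵥ v ⬝ᵥ x)}
  have hconv : ∀ x, Convex ℝ (t x) := by
    intro x v hv w hw a b ha hb hab hx
    obtain ⟨hv1, hv2⟩ := hv hx
    obtain ⟨hw1, hw2⟩ := hw hx
    have pos : ∀ {s t : ℝ}, 0 < s → 0 < t → 0 < a * s + b * t := fun {s t} hs ht => by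
      rcases ha.eq_or_lt with rfl | ha
      · have : b = 1 := by linarith
        subst this; linarith
      · have := mul_pos ha hs
        have := mul_nonneg hb ht.le
        linarith
    refine ⟨?_, fun hq => ?_⟩
    · simpa [add_dotProduct] using pos hv1 hw1
    · simpa [mulVec_add, mulVec_smul, add_dotProduct] using pos (hv2 hq) (hw2 hq)
  have hloc : ∀ x, ∃ c, ∀ᶠ y in 𝓝 x, c ∈ t y := by
    intro x
    by_cases hx : x ∈ K
    · have hpos : 0 < h x ⬝ᵥ h x := by
        simpa using dotProduct_star_self_pos_iff.2 (hne x hx)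
      -- near `x` the constant `h x + ε x` works: the term `ε x` makes it strictly outward at `x`
      have hc : Continuous fun ε : ℝ => (h x + ε • x) ⬝ᵥ h x := by fun_prop
      have he : ∀ᶠ ε in 𝓝[>] (0 : ℝ), 0 < (h x + ε • x) ⬝ᵥ h x :=
        (hc.continuousAt.eventually_const_lt (by simpa using hpos)).filter_mono nhdsWithin_le_nhds
      obtain ⟨ε, hε, hε0⟩ := (he.and self_mem_nhdsWithin).exists
      have hε0 : 0 < ε := hε0
      refine ⟨h x + ε • x, ?_⟩
      have n1 : ∀ᶠ y in 𝓝 x, y ∈ K → 0 < (h x + ε • x) ⬝ᵥ h y := by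
        have hh := hcont x hx
        have hh' : ContinuousWithinAt (fun y => (h x + ε • x) ⬝ᵥ h y) K x :=
          (show Continuous fun v => (h x + ε • x) ⬝ᵥ v by fun_prop).continuousAt.comp_continuousWithinAt hh
        exact eventually_nhdsWithin_iff.1 (hh'.eventually (lt_mem_nhds hε))
      have n2 : ∀ᶠ y in 𝓝 x, Q *ᵥ y ⬝ᵥ y = r → 0 < Q *ᵥ (h x + ε • x) ⬝ᵥ y := by
        rcases (show Q *ᵥ x ⬝ᵥ x ≤ r from hx).lt_or_eq with hlt | heq
        · filter_upwards [hqc.continuousAt.eventually_lt_const hlt] with y hy hy'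
          exact absurd hy' hy.ne
        · have hx0 : 0 < Q *ᵥ (h x + ε • x) ⬝ᵥ x := by
            have := hbd x heq
            simp only [mulVec_add, mulVec_smul, add_dotProduct, smul_dotProduct, heq, smul_eq_mul]
            positivity
          have hc2 : Continuous fun y => Q *ᵥ (h x + ε • x) ⬝ᵥ y := by fun_prop
          filter_upwards [hc2.continuousAt.eventually_const_lt hx0] with y hy _ using hy
      filter_upwards [n1, n2] with y h1 h2 hy using ⟨h1 hy, h2⟩
    · exact ⟨0, by filter_upwards [hKc.isOpen_compl.mem_nhds hx] with y hy hy' using absurd hy' hy⟩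
  obtain ⟨f, hf⟩ := exists_contMDiffMap_forall_mem_convex_of_local_const
    (modelWithCornersSelf ℝ (Fin d → ℝ)) (n := 1) hconv hloc
  refine ⟨f, f.contMDiff.contDiff, fun x hx h0 => ?_, fun x hx => (hf x hx.le).2 hx⟩
  have := (hf x hx).1
  simp [h0] at this

/-- Variant of the root lemma with respect to the inner
product induced by a symmetric positive definite matrix `Q`: if `h` is
continuous on `B_{Q,R} = {x : ⟨Qx, x⟩ ≤ R²}` and `⟨Q h(x), x⟩ ≥ 0` whenever
`⟨Qx, x⟩ = R²`, then `h` has a root in `B_{Q,R}`. -/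
theorem stmt3
    (d : ℕ) (Q : Matrix (Fin d) (Fin d) ℝ) (hQsymm : Q.IsSymm) (hQpos : Q.PosDef)
    (R : ℝ) (hR : 0 < R)
    (h : (Fin d → ℝ) → (Fin d → ℝ))
    (hcont : ContinuousOn h {x : Fin d → ℝ | Q.mulVec x ⬝ᵥ x ≤ R ^ 2})
    (hbd : ∀ x : Fin d → ℝ, Q.mulVec x ⬝ᵥ x = R ^ 2 → 0 ≤ Q.mulVec (h x) ⬝ᵥ x) :
    ∃ x₀ ∈ {x : Fin d → ℝ | Q.mulVec x ⬝ᵥ x ≤ R ^ 2}, h x₀ = 0 := by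
  by_contra! hne
  have hr : 0 < R ^ 2 := by positivity
  have hpos : ∀ x, x ≠ 0 → 0 < Q *ᵥ x ⬝ᵥ x := fun x hx => by
    have := hQpos.dotProduct_mulVec_pos hx
    rwa [star_trivial, dotProduct_comm] at this
  have hqc : Continuous fun x : Fin d → ℝ => Q *ᵥ x ⬝ᵥ x := by fun_prop
  have hK := isCompact_sublevel hpos (R ^ 2)
  obtain ⟨f, hf, hf0, hfb⟩ := exists_smooth_approx hr hcont hbd hne
  -- `χ` is `1` wherever `f` fails to point outwards, so that `χ f + (1 - χ) id` has no zeros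
  have hfc := hf.continuous
  obtain ⟨χ, hχ0, hχ1, hχ⟩ := exists_contMDiffMap_zero_one_of_isClosed
    (modelWithCornersSelf ℝ (Fin d → ℝ)) (n := 1)
    (s := {x : Fin d → ℝ | R ^ 2 ≤ Q *ᵥ x ⬝ᵥ x})
    (t := {x : Fin d → ℝ | Q *ᵥ x ⬝ᵥ x ≤ R ^ 2} ∩ {x | Q *ᵥ f x ⬝ᵥ x ≤ 0})
    (isClosed_le continuous_const hqc)
    ((isClosed_le hqc continuous_const).inter (isClosed_le (by fun_prop) continuous_const))
    (Set.disjoint_left.2 fun x hx hx' => (hfb x (le_antisymm hx'.1 hx)).not_ge hx'.2)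
  have hχd : ContDiff ℝ 1 χ := χ.contMDiff.contDiff
  obtain ⟨x, hx, hx0⟩ := exists_zero_of_id_off_compact hqc
    (fun x v => ⟨Q *ᵥ x ⬝ᵥ v + Q *ᵥ v ⬝ᵥ x, fun t => by
      simp only [mulVec_add, mulVec_smul, add_dotProduct, dotProduct_add, smul_dotProduct,
        dotProduct_smul, smul_eq_mul]
      ring⟩) (by simp) hpos hr hK (F := fun x => χ x • f x + (1 - χ x) • x)
    ((hχd.smul hf).add ((contDiff_const.sub hχd).smul contDiff_id))
    (fun x hx => by simp [show χ x = 0 from hχ0 hx.le])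
  by_cases hfx : Q *ᵥ f x ⬝ᵥ x ≤ 0
  · have : χ x = 1 := hχ1 ⟨hx, hfx⟩
    exact hf0 x hx (by simpa [this] using hx0)
  · have hfx := not_le.1 hfx
    have hxne : x ≠ 0 := by rintro rfl; simp at hfx
    have e : Q *ᵥ (χ x • f x + (1 - χ x) • x) ⬝ᵥ x = 0 := by
      rw [show χ x • f x + (1 - χ x) • x = 0 from hx0]; simp
    simp only [mulVec_add, mulVec_smul, add_dotProduct, smul_dotProduct, smul_eq_mul] at e
    have hq := hpos x hxne
    obtain ⟨c0, c1⟩ := hχ x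
    have m1 := mul_nonneg c0 hfx.le
    have m2 := mul_nonneg (sub_nonneg.2 c1) hq.le
    rcases mul_eq_zero.1 (show χ x * (Q *ᵥ f x ⬝ᵥ x) = 0 by linarith) with h0 | h0
    · rw [h0] at e; linarith
    · exact hfx.ne' h0
end
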